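/- Let K be a simplicial complex in a real vector space E, with underlying space |K| = ⋃_{s a face of K} convexHull(s), and let τ be a face of K. Then the complement of the open star of τ inside |K| is exactly the union of the closed simplices not containing τ: |K| ∖ st̊(τ) = ⋃ { convexHull(s) : s a face of K with τ ⊄ s }. -/

import Mathlib

variable {E : Type*} [AddCommGroup E] [Module ℝ E]

/-- The combinatorial interior of a finite set `s`: the convex hull of `s` minus the
convex hulls of all nonempty proper subsets of `s`. -/
def combInterior (s : Finset E) : Set E :=
  convexHull ℝ (s : Set E) \
    ⋃ (t : Finset E) (_ : t ⊂ s) (_ : t.Nonempty), convexHull ℝ (t : Set E)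

/-- The open star of a face `τ` of a simplicial complex `K`: the union of the
combinatorial interiors of all faces of `K` containing `τ`. -/
def openStar (K : Geometry.SimplicialComplex ℝ E) (τ : Finset E) : Set E :=
  ⋃ (s : Finset E) (_ : s ∈ K.faces) (_ : τ ⊆ s), combInterior s

/-- The complement of the open star of a face `τ` inside the underlying space `|K|`
is the union of the closed simplices (convex hulls of faces) not containing `τ`. -/
theorem space_diff_openStar_eq (K : Geometry.SimplicialComplex ℝ E)
    (τ : Finset E) (hτ : τ ∈ K.faces) :
    K.space \ openStar K τ =
      ⋃ (s : Finset E) (_ : s ∈ K.faces) (_ : ¬ τ ⊆ s), convexHull ℝ (s : Set E) := by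
  classical
  ext x
  simp only [openStar, combInterior, Set.mem_diff, Set.mem_iUnion, exists_prop,
    Geometry.SimplicialComplex.mem_space_iff]
  constructor
  · rintro ⟨⟨s, hs, hx⟩, hn⟩
    induction s using Finset.strongInduction with
    | H s ih =>
      by_cases h : τ ⊆ s
      · by_cases hp : ∃ t, t ⊂ s ∧ t.Nonempty ∧ x ∈ convexHull ℝ (t : Set E)
        · obtain ⟨t, hts, ht, hxt⟩ := hp
          exact ih t hts (K.down_closed hs hts.subset ht) hxt
        · exact absurd ⟨s, hs, h, hx, hp⟩ hn
      · exact ⟨s, hs, h, hx⟩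
  · rintro ⟨s, hs, h, hx⟩
    refine ⟨⟨s, hs, hx⟩, ?_⟩
    rintro ⟨t, ht, hτt, hxt, hn⟩
    have hm : x ∈ convexHull ℝ ((s ∩ t : Finset E) : Set E) := by
      rw [Finset.coe_inter]
      exact K.inter_subset_convexHull hs ht ⟨hx, hxt⟩
    refine hn ⟨s ∩ t, ?_, ?_, hm⟩
    · refine Finset.ssubset_iff_subset_ne.2 ⟨Finset.inter_subset_right, fun he => h ?_⟩
      exact hτt.trans (Finset.inter_eq_right.1 he)
    · exact Finset.coe_nonempty.1 (convexHull_nonempty_iff.1 ⟨x, hm⟩)
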